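/- If G has coclass r = 2 (so e = 3 and n = m+1, m ≥ 4) and defect k = 0 (equivalently ρ = 0), then the annihilator ideal of G equals 𝔄(G) = 𝔛_{m−2} := (X^{m−2}, Y², XY, X² + 3X + 3) as ideals of ℤ[X,Y]. -/

import Mathlib

/-!
Write `J = (X^(m-2), Y^2, XY, X^2+3X+3)` and `Q = ℤ[X,Y]`.

The inclusion `J ≤ A` is read off the relations. Since `e = 3` and `k = 0`, the element `τ₄` is
trivial, so `τ₃ = x³` is central; `σ_{m-1}` is central as well, hence so is `t₃`, which lies in the
group they generate. Thus `s₂^{Y²} = t₄ = 1`, while `s₂^{XY} = [t₃, x] = 1`,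
`s₂^{X²+3X+3} = s₂³ s₃³ s₄ = τ₄⁻¹ = 1`, and `s₂^{X^(m-2)} = s_m = 1` because `σ_m = σ_{m+1} = 1`.

The equality follows by counting. The image of `Ψ` is closed under conjugation by `x` and `y`
and contains `[y,x]`, so it contains `G'`, which has order `3^(m+1) / 9 = 3^(m-1)`
(`commutator_le_of_conj`). On the other hand `Q / J` has at most `3^(m-1)` elements: in the chain
`Q ⊇ (X, Y, 3) ⊇ (X, Y², XY, X²+3X+3) ⊇ (X², …) ⊇ ⋯ ⊇ (X^(m-2), …)` each ideal is obtained from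
the next one by adjoining a single element (`1`, `Y`, `X`, `X²`, …) which is annihilated by
`X`, `Y` and `3` modulo it (`HasReps.step`). As `Ψ` is constant on the cosets of `J`, distinct
cosets must have distinct images, which says that the kernel of `Ψ` is not larger than `J`.
-/

open MvPolynomial

/-- The paper's commutator `[a,b] = a⁻¹ b⁻¹ a b`. -/
def pcomm {G : Type*} [Group G] (a b : G) : G := a⁻¹ * b⁻¹ * a * b

/-- The iterated commutator `s₂^{(x-1)^i (y-1)^j}`, where `s₂ = [y,x]`,
obtained by commutating `i` times with `x` and `j` times with `y`. -/
def wIter {G : Type*} [Group G] (x y : G) (i j : ℕ) : G :=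
  (fun t => pcomm t x)^[i] ((fun t => pcomm t y)^[j] (pcomm y x))

/-- The higher commutators `s₂ = [y,x]`, `s_j = [s_{j-1}, x]` for `j ≥ 3`. -/
def sSeq {G : Type*} [Group G] (x y : G) (j : ℕ) : G :=
  (fun t => pcomm t x)^[j - 2] (pcomm y x)

/-- The higher commutators `t₂ = [y,x]`, `t_j = [t_{j-1}, y]` for `j ≥ 3`. -/
def tSeq {G : Type*} [Group G] (x y : G) (j : ℕ) : G :=
  (fun t => pcomm t y)^[j - 2] (pcomm y x)

/-- `σ₃ = y³`, `σ_j = [σ_{j-1}, x]` for `j ≥ 4`. -/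
def sigSeq {G : Type*} [Group G] (x y : G) (j : ℕ) : G :=
  (fun t => pcomm t x)^[j - 3] (y ^ 3)

/-- `τ₃ = x³`, `τ_j = [τ_{j-1}, y]` for `j ≥ 4`. -/
def tauSeq {G : Type*} [Group G] (x y : G) (j : ℕ) : G :=
  (fun t => pcomm t y)^[j - 3] (x ^ 3)

/-! ### Bounding the index of an ideal of `ℤ[X,Y]` -/

/-- Modulo an ideal `I` containing `X u`, `Y u` and `3 u`, every multiple of `u` is one of
`0`, `u`, `2 u`. -/
lemma exists_digit (I : Ideal (MvPolynomial (Fin 2) ℤ)) (u : MvPolynomial (Fin 2) ℤ)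
    (h0 : X 0 * u ∈ I) (h1 : X 1 * u ∈ I) (h3 : 3 * u ∈ I) (h : MvPolynomial (Fin 2) ℤ) :
    ∃ c : Fin 3, h * u - C (c : ℤ) * u ∈ I := by
  have key : ∃ a : ℤ, h * u - C a * u ∈ I := by
    induction h using MvPolynomial.induction_on with
    | C a => exact ⟨a, by simp⟩
    | add p q hp hq =>
      obtain ⟨a, ha⟩ := hp
      obtain ⟨b, hb⟩ := hq
      refine ⟨a + b, ?_⟩
      have := I.add_mem ha hb
      rw [C_add]
      convert this using 1
      ring
    | mul_X p i _ =>
      refine ⟨0, ?_⟩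
      have hi : X i * u ∈ I := by fin_cases i <;> assumption
      have := I.mul_mem_left p hi
      simpa [mul_assoc] using this
  obtain ⟨a, ha⟩ := key
  have hlt : (a % 3).toNat < 3 := by omega
  refine ⟨⟨(a % 3).toNat, hlt⟩, ?_⟩
  have hc : (((a % 3).toNat : ℕ) : ℤ) = a - 3 * (a / 3) := by omega
  have h3' := I.mul_mem_left (C (a / 3)) h3
  have := I.add_mem ha h3'
  simp only [hc]
  convert this using 1
  simp only [C_sub, C_mul, show (C (3 : ℤ) : MvPolynomial (Fin 2) ℤ) = 3 from rfl]
  ring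

/-- The quotient `ℤ[X,Y] / I` has at most `N` elements, expressed by a finite set of
representatives of the cosets of `I`. -/
def HasReps (I : Ideal (MvPolynomial (Fin 2) ℤ)) (N : ℕ) : Prop :=
  ∃ S : Finset (MvPolynomial (Fin 2) ℤ), S.card ≤ N ∧ ∀ f, ∃ s ∈ S, f - s ∈ I

/-- If `I'` is contained in `I + (u)` and `u` is annihilated by `X`, `Y`, `3` modulo `I`, then the
index of `I` is at most three times that of `I'`. -/
lemma HasReps.step {I I' : Ideal (MvPolynomial (Fin 2) ℤ)} {N : ℕ} (hI' : HasReps I' N)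
    (u : MvPolynomial (Fin 2) ℤ)
    (h0 : X 0 * u ∈ I) (h1 : X 1 * u ∈ I) (h3 : 3 * u ∈ I)
    (hle : I' ≤ I ⊔ Ideal.span {u}) : HasReps I (N * 3) := by
  classical
  obtain ⟨S, hS, hrep⟩ := hI'
  refine ⟨(S ×ˢ (Finset.univ : Finset (Fin 3))).image (fun p => p.1 + C ((p.2 : ℕ) : ℤ) * u),
    ?_, ?_⟩
  · refine Finset.card_image_le.trans ?_
    rw [Finset.card_product]
    simpa using hS
  · intro f
    obtain ⟨s, hs, hfs⟩ := hrep f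
    obtain ⟨i, hi, v, hv, hiv⟩ := Submodule.mem_sup.1 (hle hfs)
    obtain ⟨h, rfl⟩ := Ideal.mem_span_singleton'.1 hv
    obtain ⟨c, hc⟩ := exists_digit I u h0 h1 h3 h
    refine ⟨s + C ((c : ℕ) : ℤ) * u, Finset.mem_image.2 ⟨(s, c), by simp [hs], rfl⟩, ?_⟩
    have := I.add_mem hi hc
    convert this using 1
    linear_combination -hiv

/-- The ideal `(X^k, Y², XY, X² + 3X + 3)` of `ℤ[X,Y]`, with `X 0` for `X` and `X 1` for `Y`. -/
noncomputable def XIdeal (k : ℕ) : Ideal (MvPolynomial (Fin 2) ℤ) :=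
  Ideal.span {X 0 ^ k, X 1 ^ 2, X 0 * X 1, X 0 ^ 2 + 3 * X 0 + 3}

/-- The case `k = 0` adjoins `1` and then `Y`; going from `k` to `k + 1` adjoins `X^(k+1)`. -/
lemma hasReps_XIdeal (k : ℕ) : HasReps (XIdeal (k + 1)) (3 ^ (k + 2)) := by
  have mem (k : ℕ) : X 0 ^ k ∈ XIdeal k ∧ X 1 ^ 2 ∈ XIdeal k ∧ X 0 * X 1 ∈ XIdeal k ∧
      X 0 ^ 2 + 3 * X 0 + 3 ∈ XIdeal k := by
    refine ⟨?_, ?_, ?_, ?_⟩ <;> exact Ideal.subset_span (by simp)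
  induction k with
  | zero =>
    have htop : HasReps ⊤ 1 := ⟨{0}, by simp, fun f => ⟨0, by simp⟩⟩
    have hmax : HasReps (Ideal.span {X 0, X 1, 3}) (1 * 3) := by
      refine htop.step 1 ?_ ?_ ?_ ?_
      · exact Ideal.subset_span (by simp)
      · exact Ideal.subset_span (by simp)
      · exact Ideal.subset_span (by simp)
      · rw [Ideal.span_singleton_one, sup_top_eq]
    obtain ⟨hX, hY, hXY, hq⟩ := mem 1
    rw [pow_one] at hX
    have h3 : (3 : MvPolynomial (Fin 2) ℤ) ∈ XIdeal 1 := by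
      have := (XIdeal 1).sub_mem hq ((XIdeal 1).mul_mem_left (X 0 + 3) hX)
      convert this using 1
      ring
    refine hmax.step (X 1) hXY (by rwa [← pow_two]) (Ideal.mul_mem_right _ _ h3) ?_
    rw [Ideal.span_le]
    rintro p (rfl | rfl | rfl)
    · exact Ideal.mem_sup_left hX
    · exact Ideal.mem_sup_right (Ideal.mem_span_singleton_self _)
    · exact Ideal.mem_sup_left h3
  | succ k ih =>
    obtain ⟨hX, hY, hXY, hq⟩ := mem (k + 1 + 1)
    have hX' : X 0 * X 0 ^ (k + 1) ∈ XIdeal (k + 1 + 1) := by rwa [← pow_succ']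
    rw [show 3 ^ (k + 1 + 2) = 3 ^ (k + 2) * 3 from pow_succ _ _]
    refine ih.step (X 0 ^ (k + 1)) hX' ?_ ?_ ?_
    · have := (XIdeal (k + 1 + 1)).mul_mem_left (X 0 ^ k) hXY
      convert this using 1
      ring
    · have := (XIdeal (k + 1 + 1)).sub_mem ((XIdeal (k + 1 + 1)).mul_mem_left (X 0 ^ (k + 1)) hq)
        ((XIdeal (k + 1 + 1)).mul_mem_left (X 0 + 3) hX')
      convert this using 1
      ring
    · rw [XIdeal, Ideal.span_le]
      rintro p (rfl | rfl | rfl | rfl)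
      · exact Ideal.mem_sup_right (Ideal.mem_span_singleton_self _)
      · exact Ideal.mem_sup_left hY
      · exact Ideal.mem_sup_left hXY
      · exact Ideal.mem_sup_left hq

/-! ### The commutator subgroup of a two-generator group -/

/-- In a finite group generated by `x` and `y`, a subgroup containing `[y,x]` and stable under
conjugation by `x` and `y` is normal with abelian quotient, so it contains the commutator
subgroup. -/
lemma commutator_le_of_conj {G : Type*} [Group G] [Finite G] (x y : G)
    (hgen : Subgroup.closure ({x, y} : Set G) = ⊤) (N : Subgroup G)
    (hx : ∀ w ∈ N, x⁻¹ * w * x ∈ N) (hy : ∀ w ∈ N, y⁻¹ * w * y ∈ N)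
    (hc : pcomm y x ∈ N) : commutator G ≤ N := by
  have hnorm : ∀ g : G, (∀ w ∈ N, g⁻¹ * w * g ∈ N) → g ∈ Subgroup.normalizer (N : Set G) := by
    intro g hg
    rw [← inv_mem_iff]
    have : Finite (N : Set G) := inferInstance
    have := Fintype.ofFinite (N : Set G)
    refine Subgroup.mem_normalizer_fintype (S := (N : Set G)) fun w hw => ?_
    simpa using hg w hw
  have hN : N.Normal := by
    rw [← Subgroup.normalizer_eq_top_iff, eq_top_iff, ← hgen, Subgroup.closure_le]
    rintro g (rfl | rfl)
    · exact hnorm _ hx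
    · exact hnorm _ hy
  have hxy : (QuotientGroup.mk' N y) * QuotientGroup.mk' N x =
      QuotientGroup.mk' N x * QuotientGroup.mk' N y := by
    rw [← map_mul, ← map_mul, eq_comm, QuotientGroup.mk'_eq_mk']
    exact ⟨pcomm y x, hc, by unfold pcomm; group⟩
  have hcent : ∀ g, (∀ h ∈ ({x, y} : Set G), QuotientGroup.mk' N h * QuotientGroup.mk' N g =
      QuotientGroup.mk' N g * QuotientGroup.mk' N h) →
      ∀ h, QuotientGroup.mk' N h * QuotientGroup.mk' N g =
      QuotientGroup.mk' N g * QuotientGroup.mk' N h := by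
    intro g hg h
    have hle : Subgroup.closure ({x, y} : Set G) ≤
        (Subgroup.centralizer {QuotientGroup.mk' N g}).comap (QuotientGroup.mk' N) := by
      rw [Subgroup.closure_le]
      intro h hh
      exact Subgroup.mem_comap.2 (Subgroup.mem_centralizer_singleton_iff.2 (hg h hh))
    rw [hgen] at hle
    exact Subgroup.mem_centralizer_singleton_iff.1 (Subgroup.mem_comap.1 (hle (Subgroup.mem_top h)))
  have hx' := hcent x (by rintro h (rfl | rfl); exacts [rfl, hxy])
  have hy' := hcent y (by rintro h (rfl | rfl); exacts [hxy.symm, rfl])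
  have hall : ∀ g h, QuotientGroup.mk' N h * QuotientGroup.mk' N g =
      QuotientGroup.mk' N g * QuotientGroup.mk' N h := fun g =>
    hcent g (by rintro h (rfl | rfl); exacts [(hx' g).symm, (hy' g).symm])
  refine Subgroup.Normal.quotient_commutative_iff_commutator_le.1 ⟨⟨fun a b => ?_⟩⟩
  obtain ⟨a, rfl⟩ := QuotientGroup.mk'_surjective N a
  obtain ⟨b, rfl⟩ := QuotientGroup.mk'_surjective N b
  exact hall b a

lemma pcomm_eq_one_iff {G : Type*} [Group G] (a b : G) : pcomm a b = 1 ↔ Commute a b := by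
  unfold pcomm
  rw [commute_iff_eq, show a⁻¹ * b⁻¹ * a * b = (b * a)⁻¹ * (a * b) by group, inv_mul_eq_one, eq_comm]

/-! ### The annihilator ideal -/

theorem annihilator_coclass_two_defect_zero
    {G : Type*} [Group G] [Finite G]
    (m n e k : ℕ) (x y : G) (α β γ δ ρ : ℤ)
    (hm : 4 ≤ m) (hmn : m < n) (hn2m : n ≤ 2 * m - 3) (he : e = n - m + 2) (he3 : 3 ≤ e)
    (hk : k ≤ 1) (hkrho : k = 0 ↔ ρ = 0)
    (hα : α = -1 ∨ α = 0 ∨ α = 1) (hβ : β = -1 ∨ β = 0 ∨ β = 1)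
    (hγ : γ = -1 ∨ γ = 0 ∨ γ = 1) (hδ : δ = -1 ∨ δ = 0 ∨ δ = 1)
    (hρ : ρ = -1 ∨ ρ = 0 ∨ ρ = 1)
    (hcard : Nat.card G = 3 ^ n)
    (hab : Nat.card (G ⧸ commutator G) = 9)
    (habel : ∀ a ∈ commutator G, ∀ b ∈ commutator G, a * b = b * a)
    (hgen : Subgroup.closure ({x, y} : Set G) = ⊤)
    (hR1s : ∀ i, 3 ≤ i → sSeq x y i ^ 3 * sSeq x y (i + 1) ^ 3 * sSeq x y (i + 2) = 1)
    (hR1t : ∀ i, 3 ≤ i → tSeq x y i ^ 3 * tSeq x y (i + 1) ^ 3 * tSeq x y (i + 2) = 1)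
    (hR2sig : ∀ j, 3 ≤ j → sigSeq x y j ^ 3 * sigSeq x y (j + 1) ^ 3 * sigSeq x y (j + 2) = 1)
    (hR2tau : ∀ j, 3 ≤ j → tauSeq x y j ^ 3 * tauSeq x y (j + 1) ^ 3 * tauSeq x y (j + 2) = 1)
    (hR3s : sSeq x y 2 ^ 3 * sSeq x y 3 ^ 3 * sSeq x y 4 = (tauSeq x y 4)⁻¹)
    (hR3t : tSeq x y 2 ^ 3 * tSeq x y 3 ^ 3 * tSeq x y 4 = sigSeq x y 4)
    (hR4sig : ∀ j, 3 ≤ j → pcomm (sigSeq x y j) y = 1)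
    (hR4tau : ∀ j, 3 ≤ j → pcomm (tauSeq x y j) x = 1)
    (hR5a : ∀ i, 3 ≤ i → i ≤ m - 1 → sigSeq x y i ≠ 1)
    (hR5b : ∀ i, m ≤ i → sigSeq x y i = 1)
    (hR6a : ∀ j, 3 ≤ j → j ≤ e + k → tauSeq x y j ≠ 1)
    (hR6b : ∀ j, e + k + 1 ≤ j → tauSeq x y j = 1)
    (hR7sig : ∀ i, 5 ≤ i → sigSeq x y i = sSeq x y (i - 2) ^ 3)
    (hR7tau : ∀ i, 5 ≤ i → tauSeq x y i = tSeq x y (i - 2) ^ (-3 : ℤ))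
    (hR8s : ∀ j, 5 ≤ j → sSeq x y j = (sigSeq x y j)⁻¹ * (sigSeq x y (j + 1))⁻¹)
    (hR8t : ∀ j, 5 ≤ j → tSeq x y j = tauSeq x y j * tauSeq x y (j + 1))
    (hR9s : pcomm (sSeq x y 3) y = sigSeq x y (m - 1) ^ (-(ρ * δ)))
    (hR9t : pcomm (tSeq x y 3) x = sigSeq x y (m - 1) ^ (-(ρ * δ)))
    (hR10 : sSeq x y 2 ^ 3 * (sSeq x y 3 * tSeq x y 3) ^ 3 * sSeq x y 4 * tSeq x y 4 =
      sigSeq x y (m - 1) ^ (ρ * β))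
    (hR11 : tauSeq x y (e + 1) = sigSeq x y (m - 1) ^ (-ρ))
    (hR12 : sSeq x y 4 * sigSeq x y 4 * sigSeq x y 5 = sigSeq x y (m - 1) ^ (ρ * β))
    (hR13 : sSeq x y 3 * sigSeq x y 3 * sigSeq x y 4 =
      sigSeq x y (m - 2) ^ (ρ * β) * sigSeq x y (m - 1) ^ γ * tauSeq x y e ^ δ)
    (hR14 : (tSeq x y 3)⁻¹ * tauSeq x y 3 * tauSeq x y 4 =
      sigSeq x y (m - 2) ^ (ρ * δ) * sigSeq x y (m - 1) ^ α * tauSeq x y e ^ β)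
    (hk0 : k = 0) (hrho0 : ρ = 0) (hee : e = 3) (hnm : n = m + 1)
    (Ψ : MvPolynomial (Fin 2) ℤ → G)
    (hΨadd : ∀ f g, Ψ (f + g) = Ψ f * Ψ g)
    (hΨmon : ∀ i j : ℕ, Ψ (X 0 ^ i * X 1 ^ j) = wIter x y i j)
    (A : Ideal (MvPolynomial (Fin 2) ℤ))
    (hA : ∀ f, f ∈ A ↔ Ψ f = 1)
    :
    A = Ideal.span {X 0 ^ (m - 2), X 1 ^ 2, X 0 * X 1, X 0 ^ 2 + 3 * X 0 + 3} := by
  subst hk0 hrho0 hee hnm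
  simp only [zero_mul, neg_zero, zpow_zero, one_mul] at *
  have wx : ∀ i j, wIter x y (i + 1) j = pcomm (wIter x y i j) x := fun i j =>
    Function.iterate_succ_apply' _ _ _
  have wy : ∀ j, wIter x y 0 (j + 1) = pcomm (wIter x y 0 j) y := fun j =>
    Function.iterate_succ_apply' _ _ _
  have sW : ∀ i, sSeq x y (i + 2) = wIter x y i 0 := fun i => rfl
  have tW : ∀ j, tSeq x y (j + 2) = wIter x y 0 j := fun j => rfl
  have hτ4 : tauSeq x y 4 = 1 := hR6b 4 (by norm_num)
  have hσy : ∀ j, 3 ≤ j → Commute (sigSeq x y j) y := fun j hj =>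
    (pcomm_eq_one_iff _ _).1 (hR4sig j hj)
  have hsy : ∀ j, 3 ≤ j → Commute (sSeq x y j) y := by
    intro j hj
    obtain rfl | rfl | hj : j = 3 ∨ j = 4 ∨ 5 ≤ j := by omega
    · exact (pcomm_eq_one_iff _ _).1 hR9s
    · rw [mul_assoc, mul_eq_one_iff_eq_inv] at hR12
      rw [hR12]
      exact ((hσy 4 (by norm_num)).mul_left (hσy 5 (by norm_num))).inv_left
    · rw [hR8s j hj]
      exact (hσy j (by omega)).inv_left.mul_left (hσy (j + 1) (by omega)).inv_left
  -- `t₃` is a product of powers of `τ₃` and `σ_{m-1}`, which both commute with `y`.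
  have ht4 : tSeq x y 4 = 1 := by
    have hτ3 : Commute (tauSeq x y 3) y := (pcomm_eq_one_iff _ _).1 hτ4
    have h3 : tSeq x y 3 =
        tauSeq x y 3 * (sigSeq x y (m - 1) ^ α * tauSeq x y 3 ^ β)⁻¹ := by
      rw [hτ4, mul_one] at hR14
      rw [← hR14]
      group
    have : Commute (tSeq x y 3) y := by
      rw [h3]
      exact hτ3.mul_left
        (((hσy (m - 1) (by omega)).zpow_left α).mul_left (hτ3.zpow_left β)).inv_left
    exact (pcomm_eq_one_iff _ _).2 this
  have hsm : wIter x y (m - 2) 0 = 1 := by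
    rw [← sW, show m - 2 + 2 = m by omega]
    obtain rfl | hm5 : m = 4 ∨ 5 ≤ m := by omega
    · simpa [hR5b 4 le_rfl, hR5b 5 (by norm_num)] using hR12
    · simp [hR8s m hm5, hR5b m le_rfl, hR5b (m + 1) (by omega)]
  have hJA : XIdeal (m - 2) ≤ A := by
    have hp : ∀ n f, Ψ (n • f) = Ψ f ^ n := fun n f => by
      induction n with
      | zero => simpa using hΨadd 0 0
      | succ n ih => rw [succ_nsmul, hΨadd, ih, pow_succ]
    rw [XIdeal, Ideal.span_le]
    rintro f (rfl | rfl | rfl | rfl) <;> refine (hA _).2 ?_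
    · simpa [hsm] using hΨmon (m - 2) 0
    · have := hΨmon 0 2
      rw [← tW, ht4] at this
      simpa using this
    · have := hΨmon 1 1
      rw [wx, ← tW, hR9t] at this
      simpa using this
    · have h0 := hΨmon 0 0
      have h1 := hΨmon 1 0
      have h2 := hΨmon 2 0
      rw [← sW] at h0 h1 h2
      simp only [pow_zero, mul_one, pow_one] at h0 h1 h2
      -- The summands are ordered as in the relation `s₂³ s₃³ s₄ = τ₄⁻¹`.
      rw [show (X 0 ^ 2 + 3 * X 0 + 3 : MvPolynomial (Fin 2) ℤ) =
        3 • 1 + 3 • X 0 + X 0 ^ 2 by simp only [nsmul_eq_mul]; push_cast; ring,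
        hΨadd, hΨadd, hp, hp, h0, h1, h2, hR3s, hτ4, inv_one]
  have hΨ0 : Ψ 0 = 1 := (hA 0).1 A.zero_mem
  have hΨneg : ∀ f, Ψ (-f) = (Ψ f)⁻¹ := fun f => by
    rw [eq_inv_iff_mul_eq_one, ← hΨadd, neg_add_cancel, hΨ0]
  let N : Subgroup G :=
    { carrier := Set.range Ψ
      one_mem' := ⟨0, hΨ0⟩
      mul_mem' := by
        rintro _ _ ⟨f, rfl⟩ ⟨g, rfl⟩
        exact ⟨f + g, hΨadd f g⟩
      inv_mem' := by
        rintro _ ⟨f, rfl⟩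
        exact ⟨-f, hΨneg f⟩ }
  have hw : ∀ i j, wIter x y i j ∈ N := fun i j => ⟨_, hΨmon i j⟩
  have hwx : ∀ i j, pcomm (wIter x y i j) x ∈ N := fun i j => wx i j ▸ hw (i + 1) j
  have hwy : ∀ i j, pcomm (wIter x y i j) y ∈ N := by
    intro i j
    rcases i with _ | i
    · exact wy j ▸ hw 0 (j + 1)
    rcases j with _ | j
    · rw [← sW, (pcomm_eq_one_iff _ _).2 (hsy (i + 1 + 2) (by omega))]
      exact N.one_mem
    · have : wIter x y (i + 1) (j + 1) = 1 := by
        rw [← hΨmon, ← hA]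
        have := A.mul_mem_left (X 0 ^ i * X 1 ^ j) (hJA (Ideal.subset_span
          (by simp) : X 0 * X 1 ∈ XIdeal (m - 2)))
        convert this using 1
        ring
      rw [this, (pcomm_eq_one_iff _ _).2 (Commute.one_left y)]
      exact N.one_mem
  -- Stability under conjugation need only be tested on the monomials, which span `ℤ[X,Y]`.
  have hconj : ∀ g : G, (∀ i j, pcomm (wIter x y i j) g ∈ N) → ∀ w ∈ N, g⁻¹ * w * g ∈ N := by
    rintro g hg _ ⟨f, rfl⟩
    have hf : f ∈ AddSubgroup.closure
        {p : MvPolynomial (Fin 2) ℤ | ∃ i j : ℕ, p = X 0 ^ i * X 1 ^ j} := by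
      induction f using MvPolynomial.induction_on' with
      | monomial u a =>
        have : monomial u a = a • (X 0 ^ u 0 * X 1 ^ u 1 : MvPolynomial (Fin 2) ℤ) := by
          rw [monomial_eq, Finsupp.prod_fintype _ _ (by simp), Fin.prod_univ_two, smul_eq_C_mul]
        rw [this]
        exact zsmul_mem (AddSubgroup.subset_closure (Set.mem_ofPred.2 ⟨u 0, u 1, rfl⟩)) a
      | add p q hp hq => exact add_mem hp hq
    induction hf using AddSubgroup.closure_induction with
    | mem p hp =>
      obtain ⟨i, j, rfl⟩ := hp
      rw [hΨmon, show g⁻¹ * wIter x y i j * g = wIter x y i j * pcomm (wIter x y i j) g by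
        unfold pcomm; group]
      exact N.mul_mem (hw i j) (hg i j)
    | zero => rw [hΨ0]; simp
    | add p q _ _ hp hq =>
      rw [hΨadd, show g⁻¹ * (Ψ p * Ψ q) * g = (g⁻¹ * Ψ p * g) * (g⁻¹ * Ψ q * g) by group]
      exact N.mul_mem hp hq
    | neg p _ hp =>
      rw [hΨneg, show g⁻¹ * (Ψ p)⁻¹ * g = (g⁻¹ * Ψ p * g)⁻¹ by group]
      exact N.inv_mem hp
  have hG'N : commutator G ≤ N :=
    commutator_le_of_conj x y hgen N (hconj x hwx) (hconj y hwy) (hw 0 0)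
  have hcardN : 3 ^ (m - 1) ≤ Nat.card N := by
    have h1 := (commutator G).card_eq_card_quotient_mul_card_subgroup
    rw [hcard, hab, show m + 1 = m - 1 + 2 by omega, pow_add] at h1
    have h2 := Nat.card_le_card_of_injective _ (Subgroup.inclusion_injective hG'N)
    omega
  obtain ⟨S, hS, hrep⟩ := hasReps_XIdeal (m - 3)
  rw [show m - 3 + 1 = m - 2 by omega] at hrep
  rw [show m - 3 + 2 = m - 1 by omega] at hS
  have hΨS : ∀ f s, f - s ∈ XIdeal (m - 2) → Ψ f = Ψ s := fun f s hfs => by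
    rw [← sub_add_cancel f s, hΨadd, (hA _).1 (hJA hfs), one_mul]
  classical
  have hinj : Set.InjOn Ψ S := by
    rw [← Finset.card_image_iff]
    refine le_antisymm Finset.card_image_le (hS.trans (hcardN.trans ?_))
    have hsub : (N : Set G) ⊆ (S.image Ψ : Finset G) := by
      rintro _ ⟨f, rfl⟩
      obtain ⟨s, hs, hfs⟩ := hrep f
      rw [hΨS f s hfs]
      exact Finset.mem_coe.2 (Finset.mem_image_of_mem _ hs)
    have := Set.ncard_le_ncard hsub (Finset.finite_toSet _)
    rwa [Set.ncard_coe_finset] at this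
  refine le_antisymm (fun f hf => ?_) hJA
  obtain ⟨s, hs, hfs⟩ := hrep f
  obtain ⟨s₀, hs₀, h0s⟩ := hrep 0
  have : s = s₀ := hinj hs hs₀ (by
    rw [← hΨS f s hfs, ← hΨS 0 s₀ h0s, (hA f).1 hf, hΨ0])
  subst this
  have := (XIdeal (m - 2)).sub_mem hfs h0s
  rw [sub_sub_sub_cancel_right, sub_zero] at this
  exact this
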